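/- arXiv:1807.00160 — 2 statements merged into one kernel-verified Lean document; each statement's English description precedes it below -/
import Mathlib

section
/- For all δ ≥ 0 and A ≥ 0 there exists a constant C = C(δ, A) with the following property. Let Y be a proper geodesic δ-hyperbolic metric space, let ρ₀ be a ray in Y, and let h and h' be two horofunctions at ρ₀ with constant A. Then |(h(y) − h(y')) − (h'(y) − h'(y'))| ≤ C for all y, y' ∈ Y; that is, any two horofunctions at the same ideal point coarsely differ by an additive constant. -/
section HyperbolicGeometry

variable {Y : Type*} [MetricSpace Y]

/-- `s` is a geodesic segment from `x` to `y`: the image of an isometric embedding of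
`[0, dist x y]` sending `0 ↦ x` and `dist x y ↦ y`. -/
def IsGeodesicSegment (s : Set Y) (x y : Y) : Prop :=
  ∃ c : ℝ → Y,
    (∀ t₁ ∈ Set.Icc (0 : ℝ) (dist x y), ∀ t₂ ∈ Set.Icc (0 : ℝ) (dist x y),
      dist (c t₁) (c t₂) = |t₁ - t₂|) ∧
    c 0 = x ∧ c (dist x y) = y ∧ s = c '' Set.Icc (0 : ℝ) (dist x y)

/-- A metric space is geodesic if any two points are connected by a geodesic segment. -/
def IsGeodesicSpace (Y : Type*) [MetricSpace Y] : Prop :=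
  ∀ x y : Y, ∃ s : Set Y, IsGeodesicSegment s x y

/-- `Y` is `δ`-hyperbolic: every geodesic triangle is `δ`-thin, i.e. each side is contained in
the `δ`-neighborhood of the union of the other two sides. -/
def IsDeltaHyperbolic (Y : Type*) [MetricSpace Y] (δ : ℝ) : Prop :=
  ∀ x y z : Y, ∀ sxy syz szx : Set Y,
    IsGeodesicSegment sxy x y → IsGeodesicSegment syz y z → IsGeodesicSegment szx z x →
      (∀ p ∈ sxy, ∃ q ∈ syz ∪ szx, dist p q ≤ δ) ∧
      (∀ p ∈ syz, ∃ q ∈ szx ∪ sxy, dist p q ≤ δ) ∧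
      (∀ p ∈ szx, ∃ q ∈ sxy ∪ syz, dist p q ≤ δ)

/-- A (geodesic) ray in `Y`, parameterized by `[0, ∞)`. -/
def IsRay (ρ : ℝ → Y) : Prop :=
  ∀ s t : ℝ, 0 ≤ s → 0 ≤ t → dist (ρ s) (ρ t) = |s - t|

/-- Two rays are asymptotic if their images are at finite Hausdorff distance. -/
def AsymptoticRays (ρ ρ' : ℝ → Y) : Prop :=
  ∃ D : ℝ, (∀ s : ℝ, 0 ≤ s → ∃ t : ℝ, 0 ≤ t ∧ dist (ρ s) (ρ' t) ≤ D) ∧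
    (∀ t : ℝ, 0 ≤ t → ∃ s : ℝ, 0 ≤ s ∧ dist (ρ s) (ρ' t) ≤ D)

/-- `h` is a horofunction at (the ideal point of) the ray `ρ₀` with constant `A`:
`h` is `1`-Lipschitz and decays with coarse slope `-1` along every ray asymptotic to `ρ₀`. -/
def IsHorofunction (ρ₀ : ℝ → Y) (A : ℝ) (h : Y → ℝ) : Prop :=
  LipschitzWith 1 h ∧
    ∀ ρ : ℝ → Y, IsRay ρ → AsymptoticRays ρ ρ₀ →
      ∀ t₁ t₂ : ℝ, 0 ≤ t₁ → 0 ≤ t₂ → |(h (ρ t₂) - h (ρ t₁)) - (t₁ - t₂)| ≤ A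

/-- An isometry `φ` of `Y` is hyperbolic if some (equivalently, every) orbit map
`ℤ → Y`, `n ↦ φⁿ y`, is a quasi-isometric embedding. -/
def IsHyperbolicIsometry (φ : Y ≃ᵢ Y) : Prop :=
  ∃ y : Y, ∃ L A : ℝ, 0 < L ∧ ∀ m n : ℤ,
    L⁻¹ * |(m : ℝ) - (n : ℝ)| - A ≤ dist ((φ ^ m) y) ((φ ^ n) y) ∧
    dist ((φ ^ m) y) ((φ ^ n) y) ≤ L * |(m : ℝ) - (n : ℝ)| + A

end HyperbolicGeometry

/-!
A horofunction at the ideal point of `ρ₀` is coarsely the Busemann function of `ρ₀`: for `u` large,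
`h x - h (ρ₀ u)` agrees with `dist x (ρ₀ u)` up to `A + 2 * δ`. The upper bound is the Lipschitz
condition. For the lower bound, a limit of geodesics from `x` to `ρ₀ T` as `T → ∞` is a ray `ρ` from
`x` asymptotic to `ρ₀`; thin triangles force `ρ`, at time `dist x (ρ₀ u)`, to be within `2 * δ` of
`ρ₀ u`, and `h` decays with coarse slope `-1` along `ρ`. Since `dist x (ρ₀ u)` does not depend on
`h`, it cancels in the difference of two horofunctions.
-/

open Filter Set Topology

section

variable {Y : Type*} [MetricSpace Y] {δ A : ℝ} {x y z p : Y} {s s' : Set Y}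

/-- The restriction of `c` to the set of parameters `S` is a geodesic parametrized by arc length.
The parameter set is kept arbitrary so that the notion covers both the parametrizations of
geodesic segments, on `[0, dist x y]`, and rays, on `[0, ∞)`. -/
def IsGeodesicOn (c : ℝ → Y) (S : Set ℝ) : Prop :=
  ∀ t₁ ∈ S, ∀ t₂ ∈ S, dist (c t₁) (c t₂) = |t₁ - t₂|

namespace IsGeodesicOn

variable {c : ℝ → Y} {S : Set ℝ} {t u : ℝ}

lemma mono {S' : Set ℝ} (hc : IsGeodesicOn c S) (hS : S' ⊆ S) : IsGeodesicOn c S' :=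
  fun t₁ h₁ t₂ h₂ => hc t₁ (hS h₁) t₂ (hS h₂)

lemma dist_zero_left (hc : IsGeodesicOn c S) (hzero : 0 ∈ S) (ht : t ∈ S) (ht0 : 0 ≤ t) :
    dist (c 0) (c t) = t := by
  rw [hc 0 hzero t ht, zero_sub, abs_neg, abs_of_nonneg ht0]

/-- The parameter of a point of the geodesic is its distance to `c 0`, so a point `p` near the
geodesic is near the point whose parameter is `dist (c 0) p`. -/
lemma dist_le_abs_sub_dist_add (hc : IsGeodesicOn c S) (hzero : 0 ∈ S) (ht : t ∈ S) (hu : u ∈ S)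
    (hu0 : 0 ≤ u) : dist (c t) p ≤ |t - dist (c 0) p| + 2 * dist (c u) p := by
  have param_sub_le : |dist (c 0) p - u| ≤ dist (c u) p := by
    have := abs_dist_sub_le p (c u) (c 0)
    rwa [dist_comm p, dist_comm (c u) (c 0), hc.dist_zero_left hzero hu hu0, dist_comm p] at this
  calc dist (c t) p ≤ dist (c t) (c u) + dist (c u) p := dist_triangle ..
    _ = |t - u| + dist (c u) p := by rw [hc t ht u hu]
    _ ≤ |t - dist (c 0) p| + |dist (c 0) p - u| + dist (c u) p := by
      gcongr
      exact abs_sub_le ..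
    _ ≤ |t - dist (c 0) p| + 2 * dist (c u) p := by linarith

lemma of_tendsto {ι : Type*} {l : Filter ι} [l.NeBot] {γ : ι → ℝ → Y} {S' : ι → Set ℝ}
    (hγ : ∀ i, IsGeodesicOn (γ i) (S' i)) (hS : ∀ t ∈ S, ∀ᶠ i in l, t ∈ S' i)
    (hlim : ∀ t ∈ S, Tendsto (γ · t) l (𝓝 (c t))) : IsGeodesicOn c S := by
  intro t₁ h₁ t₂ h₂
  refine tendsto_nhds_unique_of_eventuallyEq ((hlim t₁ h₁).dist (hlim t₂ h₂))
    tendsto_const_nhds ?_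
  filter_upwards [hS t₁ h₁, hS t₂ h₂] with i h₁' h₂' using hγ i t₁ h₁' t₂ h₂'

lemma isGeodesicSegment_image (hc : IsGeodesicOn c (Icc 0 (dist x y))) (hx : c 0 = x)
    (hy : c (dist x y) = y) : IsGeodesicSegment (c '' Icc 0 (dist x y)) x y :=
  ⟨c, hc, hx, hy, rfl⟩

end IsGeodesicOn

namespace IsGeodesicSegment

lemma symm (hs : IsGeodesicSegment s x y) : IsGeodesicSegment s y x := by
  obtain ⟨c, hc, hx, hy, rfl⟩ := hs
  rw [IsGeodesicSegment, dist_comm y x]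
  refine ⟨fun t => c (dist x y - t), fun t₁ h₁ t₂ h₂ => ?_, by simpa using hy,
    by simpa using hx, ?_⟩
  · rw [hc _ ⟨sub_nonneg.2 h₁.2, sub_le_self _ h₁.1⟩ _ ⟨sub_nonneg.2 h₂.2, sub_le_self _ h₂.1⟩,
      sub_sub_sub_cancel_left, abs_sub_comm]
  · rw [← image_image c (dist x y - ·), image_const_sub_Icc, sub_self, sub_zero]

lemma dist_left_le (hs : IsGeodesicSegment s x y) (hp : p ∈ s) : dist x p ≤ dist x y := by
  obtain ⟨c, hc, hx, -, rfl⟩ := hs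
  obtain ⟨t, ht, rfl⟩ := hp
  nth_rw 1 [← hx]
  rw [IsGeodesicOn.dist_zero_left hc (left_mem_Icc.2 dist_nonneg) ht ht.1]
  exact ht.2

lemma left_mem (hs : IsGeodesicSegment s x y) : x ∈ s := by
  obtain ⟨c, -, hx, -, rfl⟩ := hs
  exact ⟨0, left_mem_Icc.2 dist_nonneg, hx⟩

end IsGeodesicSegment

namespace IsDeltaHyperbolic

lemma nonneg [Nonempty Y] (hg : IsGeodesicSpace Y) (hY : IsDeltaHyperbolic Y δ) : 0 ≤ δ := by
  obtain ⟨x⟩ := ‹Nonempty Y›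
  obtain ⟨s, hs⟩ := hg x x
  obtain ⟨q, -, hq⟩ := (hY x x x s s s hs hs hs).1 x hs.left_mem
  exact dist_nonneg.trans hq

lemma exists_dist_le_of_lt_dist (hg : IsGeodesicSpace Y) (hY : IsDeltaHyperbolic Y δ)
    (hs : IsGeodesicSegment s x z) (hs' : IsGeodesicSegment s' y z) (hp : p ∈ s)
    (hlt : dist x y + δ < dist x p) : ∃ q ∈ s', dist p q ≤ δ := by
  obtain ⟨b, hb⟩ := hg y x
  obtain ⟨q, hq | hq, hpq⟩ := (hY x z y s s' b hs hs'.symm hb).1 p hp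
  · exact ⟨q, hq, hpq⟩
  · linarith [dist_triangle_right x p q, hb.symm.dist_left_le hq]

lemma exists_dist_le_add (hg : IsGeodesicSpace Y) (hY : IsDeltaHyperbolic Y δ)
    (hs : IsGeodesicSegment s x z) (hs' : IsGeodesicSegment s' y z) (hp : p ∈ s) :
    ∃ q ∈ s', dist p q ≤ dist x y + δ := by
  obtain ⟨b, hb⟩ := hg y x
  obtain ⟨q, hq | hq, hpq⟩ := (hY x z y s s' b hs hs'.symm hb).1 p hp
  · exact ⟨q, hq, hpq.trans (le_add_of_nonneg_left dist_nonneg)⟩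
  · refine ⟨y, hs'.left_mem, ?_⟩
    linarith [dist_triangle_right p y q, hb.dist_left_le hq, dist_comm x y]

end IsDeltaHyperbolic

namespace IsRay

variable {ρ : ℝ → Y} {t u T : ℝ}

lemma isGeodesicOn (hρ : IsRay ρ) : IsGeodesicOn ρ (Ici 0) :=
  fun t₁ h₁ t₂ h₂ => hρ t₁ t₂ h₁ h₂

lemma dist_zero_left (hρ : IsRay ρ) (ht : 0 ≤ t) : dist (ρ 0) (ρ t) = t :=
  hρ.isGeodesicOn.dist_zero_left self_mem_Ici ht ht

lemma isGeodesicSegment_image (hρ : IsRay ρ) (hT : 0 ≤ T) :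
    IsGeodesicSegment (ρ '' Icc 0 T) (ρ 0) (ρ T) := by
  have hdist := hρ.dist_zero_left hT
  have hgeod : IsGeodesicOn ρ (Icc 0 (dist (ρ 0) (ρ T))) := hρ.isGeodesicOn.mono Icc_subset_Ici_self
  simpa only [hdist] using hgeod.isGeodesicSegment_image rfl (by rw [hdist])

lemma tendsto_dist_atTop (hρ : IsRay ρ) (x : Y) :
    Tendsto (fun T => dist x (ρ T)) atTop atTop := by
  refine tendsto_atTop_mono' atTop ?_
    (tendsto_atTop_add_const_right atTop (-dist x (ρ 0)) tendsto_id)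
  filter_upwards [eventually_ge_atTop 0] with T hT
  have := dist_triangle_left (ρ 0) (ρ T) x
  rw [hρ.dist_zero_left hT] at this
  simpa only [id_eq, add_neg_le_iff_le_add'] using this

section Geodesic

variable {c : ℝ → Y}

lemma dist_geodesic_le (hg : IsGeodesicSpace Y) (hY : IsDeltaHyperbolic Y δ) (hρ : IsRay ρ)
    (hT : 0 ≤ T) (hc : IsGeodesicOn c (Icc 0 (dist x (ρ T)))) (hx : c 0 = x)
    (hend : c (dist x (ρ T)) = ρ T) (ht : t ∈ Icc 0 (dist x (ρ T))) :
    dist (c t) (ρ t) ≤ 3 * dist x (ρ 0) + 2 * δ := by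
  obtain ⟨-, ⟨u, hu, rfl⟩, hclose⟩ := hY.exists_dist_le_add hg
    (hc.isGeodesicSegment_image hx hend) (hρ.isGeodesicSegment_image hT) (mem_image_of_mem c ht)
  have param_sub_le : |t - dist (ρ 0) (c t)| ≤ dist x (ρ 0) := by
    have := hc.dist_zero_left (left_mem_Icc.2 dist_nonneg) ht ht.1
    rw [hx] at this
    nth_rw 1 [← this]
    exact abs_dist_sub_le ..
  have := hρ.isGeodesicOn.dist_le_abs_sub_dist_add (p := c t) self_mem_Ici ht.1 hu.1 hu.1
  rw [dist_comm (ρ t), dist_comm (ρ u)] at this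
  linarith

lemma dist_geodesic_dist_le (hg : IsGeodesicSpace Y) (hY : IsDeltaHyperbolic Y δ) (hρ : IsRay ρ)
    (hc : IsGeodesicOn c (Icc 0 (dist x (ρ T)))) (hx : c 0 = x) (hend : c (dist x (ρ T)) = ρ T)
    (huT : u ≤ T) (hlt : dist x (ρ 0) + δ < u) (hle : dist x (ρ u) ≤ dist x (ρ T)) :
    dist (c (dist x (ρ u))) (ρ u) ≤ 2 * δ := by
  have : Nonempty Y := ⟨x⟩
  have hu : 0 ≤ u := (add_nonneg dist_nonneg (hY.nonneg hg)).trans hlt.le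
  obtain ⟨-, ⟨t, ht, rfl⟩, hclose⟩ := hY.exists_dist_le_of_lt_dist hg
    (hρ.isGeodesicSegment_image (hu.trans huT)) (hc.isGeodesicSegment_image hx hend)
    (mem_image_of_mem ρ ⟨hu, huT⟩) (by rwa [hρ.dist_zero_left hu, dist_comm])
  have := hc.dist_le_abs_sub_dist_add (p := ρ u) (left_mem_Icc.2 dist_nonneg)
    ⟨dist_nonneg, hle⟩ ht ht.1
  rw [hx, sub_self, abs_zero, dist_comm (c t)] at this
  linarith

end Geodesic

end IsRay

lemma AsymptoticRays.of_dist_le {ρ ρ' : ℝ → Y} {K : ℝ}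
    (hK : ∀ t, 0 ≤ t → dist (ρ t) (ρ' t) ≤ K) : AsymptoticRays ρ ρ' :=
  ⟨K, fun t ht => ⟨t, ht, hK t ht⟩, fun t ht => ⟨t, ht, hK t ht⟩⟩

lemma exists_isRay_tendsto [ProperSpace Y] {ι : Type*} (U : Ultrafilter ι) {c : ι → ℝ → Y}
    {L : ι → ℝ} (hL : Tendsto L U atTop) (hc : ∀ i, IsGeodesicOn (c i) (Icc 0 (L i)))
    (hx : ∀ i, c i 0 = x) :
    ∃ ρ : ℝ → Y, IsRay ρ ∧ ρ 0 = x ∧ ∀ t, 0 ≤ t → Tendsto (c · t) U (𝓝 (ρ t)) := by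
  have eventually_mem : ∀ t, 0 ≤ t → ∀ᶠ i in U, t ∈ Icc 0 (L i) := fun t ht => by
    filter_upwards [hL.eventually_ge_atTop t] with i hi using ⟨ht, hi⟩
  have exists_limit : ∀ t, 0 ≤ t → ∃ p, Tendsto (c · t) U (𝓝 p) := fun t ht => by
    have mem_ball : ∀ᶠ i in U, c i t ∈ Metric.closedBall x t := by
      filter_upwards [eventually_mem t ht] with i hi
      have := (hc i).dist_zero_left (left_mem_Icc.2 (ht.trans hi.2)) hi ht
      rw [hx] at this
      exact (dist_comm _ _).trans_le this.le
    obtain ⟨p, -, hp⟩ := (isCompact_closedBall x t).ultrafilter_le_nhds (U.map (c · t))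
      (le_principal_iff.2 mem_ball)
    exact ⟨p, hp⟩
  have : Nonempty Y := ⟨x⟩
  choose! ρ hρ using exists_limit
  have hray : IsGeodesicOn ρ (Ici 0) := .of_tendsto hc eventually_mem hρ
  have hzero : ρ 0 = x := tendsto_nhds_unique (hρ 0 le_rfl) (by simp only [hx, tendsto_const_nhds])
  exact ⟨ρ, fun t₁ t₂ h₁ h₂ => hray t₁ h₁ t₂ h₂, hzero, hρ⟩

lemma IsRay.exists_asymptoticRays_from [ProperSpace Y] (hg : IsGeodesicSpace Y)
    (hY : IsDeltaHyperbolic Y δ) {ρ₀ : ℝ → Y} (hρ₀ : IsRay ρ₀) (x : Y) :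
    ∃ ρ : ℝ → Y, IsRay ρ ∧ ρ 0 = x ∧ AsymptoticRays ρ ρ₀ ∧
      ∀ u, dist x (ρ₀ 0) + δ < u → dist (ρ (dist x (ρ₀ u))) (ρ₀ u) ≤ 2 * δ := by
  choose _ c hc hx hend _ using fun T => hg x (ρ₀ T)
  let U : Ultrafilter ℝ := .of atTop
  have hU : (U : Filter ℝ) ≤ atTop := Ultrafilter.of_le atTop
  have hlength : Tendsto (fun T => dist x (ρ₀ T)) U atTop := (hρ₀.tendsto_dist_atTop x).mono_left hU
  obtain ⟨ρ, hρ, hρx, hlim⟩ := exists_isRay_tendsto U hlength hc hx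
  refine ⟨ρ, hρ, hρx, .of_dist_le (K := 3 * dist x (ρ₀ 0) + 2 * δ) fun t ht => ?_,
    fun u hlt => ?_⟩
  · refine le_of_tendsto ((hlim t ht).dist tendsto_const_nhds) ?_
    filter_upwards [hU (eventually_ge_atTop 0), hlength.eventually_ge_atTop t] with T hT htT
    exact hρ₀.dist_geodesic_le hg hY hT (hc T) (hx T) (hend T) ⟨ht, htT⟩
  · refine le_of_tendsto ((hlim _ dist_nonneg).dist tendsto_const_nhds) ?_
    filter_upwards [hU (eventually_ge_atTop u), hlength.eventually_ge_atTop (dist x (ρ₀ u))]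
      with T huT hle
    exact hρ₀.dist_geodesic_dist_le hg hY (hc T) (hx T) (hend T) huT hlt hle

namespace IsHorofunction

variable {ρ₀ : ℝ → Y} {h h' : Y → ℝ} {u : ℝ}

lemma sub_le_dist (hh : IsHorofunction ρ₀ A h) (x y : Y) : h x - h y ≤ dist x y := by
  simpa using (le_abs_self _).trans (hh.1.dist_le_mul x y)

lemma dist_sub_le_sub [ProperSpace Y] (hg : IsGeodesicSpace Y) (hY : IsDeltaHyperbolic Y δ)
    (hρ₀ : IsRay ρ₀) (hh : IsHorofunction ρ₀ A h) (hlt : dist x (ρ₀ 0) + δ < u) :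
    dist x (ρ₀ u) - (A + 2 * δ) ≤ h x - h (ρ₀ u) := by
  obtain ⟨ρ, hρ, rfl, hasymp, hclose⟩ := hρ₀.exists_asymptoticRays_from hg hY x
  have hdecay := (abs_le.1 (hh.2 ρ hρ hasymp 0 (dist (ρ 0) (ρ₀ u)) le_rfl dist_nonneg)).2
  have hlip := hh.sub_le_dist (ρ₀ u) (ρ (dist (ρ 0) (ρ₀ u)))
  rw [dist_comm (ρ₀ u)] at hlip
  linarith [hclose u hlt]

lemma abs_sub_sub_sub_le [ProperSpace Y] (hg : IsGeodesicSpace Y) (hY : IsDeltaHyperbolic Y δ)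
    (hρ₀ : IsRay ρ₀) (hh : IsHorofunction ρ₀ A h) (hh' : IsHorofunction ρ₀ A h')
    (hlt : dist x (ρ₀ 0) + δ < u) :
    |(h x - h (ρ₀ u)) - (h' x - h' (ρ₀ u))| ≤ A + 2 * δ := by
  have lower := hh.dist_sub_le_sub hg hY hρ₀ hlt
  have lower' := hh'.dist_sub_le_sub hg hY hρ₀ hlt
  have upper := hh.sub_le_dist x (ρ₀ u)
  have upper' := hh'.sub_le_dist x (ρ₀ u)
  rw [abs_le]
  constructor <;> linarith

end IsHorofunction

end

/-- For all `δ ≥ 0` and `A ≥ 0` there is `C = C(δ, A)`: if `Y` is a proper geodesic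
`δ`-hyperbolic space and `h, h'` are two horofunctions at the same ray `ρ₀` with constant `A`,
then `|(h(y) − h(y')) − (h'(y) − h'(y'))| ≤ C` for all `y, y' ∈ Y`; i.e. any two horofunctions
at the same ideal point coarsely differ by an additive constant. -/
theorem horofunctions_coarsely_differ_by_constant :
    ∀ δ A : ℝ, 0 ≤ δ → 0 ≤ A → ∃ C : ℝ,
      ∀ (Y : Type*) [MetricSpace Y], ∀ (_ : ProperSpace Y),
        IsGeodesicSpace Y → IsDeltaHyperbolic Y δ →
        ∀ ρ₀ : ℝ → Y, IsRay ρ₀ →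
        ∀ h h' : Y → ℝ, IsHorofunction ρ₀ A h → IsHorofunction ρ₀ A h' →
        ∀ y y' : Y, |(h y - h y') - (h' y - h' y')| ≤ C := by
  intro δ A _ _
  refine ⟨2 * (A + 2 * δ), fun Y _ _ hg hY ρ₀ hρ₀ h h' hh hh' y y' => ?_⟩
  let u := dist y (ρ₀ 0) + dist y' (ρ₀ 0) + δ + 1
  have near_y := hh.abs_sub_sub_sub_le hg hY hρ₀ hh' (x := y) (u := u)
    (by linarith [dist_nonneg (x := y') (y := ρ₀ 0)])
  have near_y' := hh.abs_sub_sub_sub_le hg hY hρ₀ hh' (x := y') (u := u)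
    (by linarith [dist_nonneg (x := y) (y := ρ₀ 0)])
  calc |(h y - h y') - (h' y - h' y')|
      = |((h y - h (ρ₀ u)) - (h' y - h' (ρ₀ u))) - ((h y' - h (ρ₀ u)) - (h' y' - h' (ρ₀ u)))| := by
        ring_nf
    _ ≤ (A + 2 * δ) + (A + 2 * δ) := (abs_sub _ _).trans (add_le_add near_y near_y')
    _ = 2 * (A + 2 * δ) := by ring
end

section
/- For every δ ≥ 0 and D ≥ 0 there exists D' = D'(δ, D) with the following property. Let Y be a proper geodesic δ-hyperbolic metric space and let q : H → Y be a D-straight holey line, where H ⊆ ℝ. Then there exist an interval I ⊆ ℝ, a geodesic c : I → Y (an isometric embedding), and a nondecreasing map m : H → I such that d(q(h), c(m(h))) ≤ D' for all h ∈ H. -/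
section StraightHoleyLines

variable {Y : Type*} [MetricSpace Y]

/-- A triple `(x, y, z)` in `Y` is `D`-straight if there are points `x', y', z'` lying in this
order on a geodesic segment with `dist x x' ≤ D`, `dist y y' ≤ D`, `dist z z' ≤ D`. -/
def IsStraightTriple (D : ℝ) (x y z : Y) : Prop :=
  ∃ x' y' z' : Y, (∃ s : Set Y, IsGeodesicSegment s x' z' ∧ y' ∈ s) ∧
    dist x x' ≤ D ∧ dist y y' ≤ D ∧ dist z z' ≤ D

/-- A holey line `q : H → Y`, `H ⊆ ℝ`, is `D`-straight if all triples in its image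
(in the correct order) are `D`-straight. -/
def IsStraightHoleyLine (D : ℝ) (H : Set ℝ) (q : ℝ → Y) : Prop :=
  ∀ hm ∈ H, ∀ h ∈ H, ∀ hp ∈ H, hm ≤ h → h ≤ hp →
    IsStraightTriple D (q hm) (q h) (q hp)

end StraightHoleyLines

/-!
If `H` has a least element `a` and a greatest element `b`, thinness of quadrilaterals puts each
`q h` near a point `c (t h)` of a geodesic `c` from `q a` to `q b`. Since `t h` is roughly
`dist (q a) (q h)`, straightness makes `t` nondecreasing up to a bounded error, and replacing `t h`
by the supremum of `t` over the points up to `h` makes it nondecreasing.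

For general `H`, the geodesics obtained for its finite subsets, extended to `1`-Lipschitz maps on
`ℝ` and shifted so that a fixed `h₀` has parameter `0`, converge along an ultrafilter because `Y`
is proper. The limit is `1`-Lipschitz and preserves distances between the limit parameters, and a
`1`-Lipschitz map preserving the distance between two endpoints is isometric in between.
-/

section MetricPreliminaries

open Filter Set Topology

theorem exists_monotoneOn_of_le_add {ι : Type*} [Preorder ι] {H : Set ι} {f : ι → ℝ}
    {lo hi C : ℝ} (hf : MapsTo f H (Icc lo hi))
    (hmono : ∀ h ∈ H, ∀ k ∈ H, h ≤ k → f h ≤ f k + C) :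
    ∃ m : ι → ℝ, MonotoneOn m H ∧ MapsTo m H (Icc lo hi) ∧ ∀ h ∈ H, dist (f h) (m h) ≤ C := by
  let m : ι → ℝ := fun h ↦ sSup (f '' (H ∩ Iic h))
  have hlub : ∀ h ∈ H, IsLUB (f '' (H ∩ Iic h)) (m h) := fun h hh ↦
    isLUB_csSup ⟨f h, mem_image_of_mem f ⟨hh, le_rfl⟩⟩
      ⟨hi, forall_mem_image.2 fun k hk ↦ (hf hk.1).2⟩
  have f_le : ∀ h ∈ H, f h ≤ m h := fun h hh ↦
    (hlub h hh).1 (mem_image_of_mem f ⟨hh, le_rfl⟩)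
  have m_le : ∀ h ∈ H, m h ≤ f h + C := fun h hh ↦
    (hlub h hh).2 (forall_mem_image.2 fun k hk ↦ hmono k hk.1 h hh hk.2)
  refine ⟨m, fun h hh k hk hhk ↦ ?_, fun h hh ↦ ⟨(hf hh).1.trans (f_le h hh), ?_⟩,
    fun h hh ↦ ?_⟩
  · exact (hlub h hh).mono (hlub k hk) (by gcongr)
  · exact (hlub h hh).2 (forall_mem_image.2 fun k hk ↦ (hf hk.1).2)
  · rw [dist_comm, Real.dist_eq, abs_of_nonneg (sub_nonneg.2 (f_le h hh))]
    linarith [m_le h hh]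

theorem exists_tendsto_of_eventually_dist_le {α Z : Type*} [PseudoMetricSpace Z] [ProperSpace Z]
    (U : Ultrafilter α) {f : α → Z} {z : Z} {r : ℝ} (hf : ∀ᶠ i in U, dist (f i) z ≤ r) :
    ∃ w, Tendsto f U (𝓝 w) := by
  obtain ⟨w, -, hw⟩ := (isCompact_closedBall z r).ultrafilter_le_nhds (U.map f)
    (le_principal_iff.2 hf)
  exact ⟨w, hw⟩

theorem tendsto_apply_of_lipschitzWith {α X Z : Type*} [PseudoMetricSpace X]
    [PseudoMetricSpace Z] {l : Filter α} {K : NNReal} {f : α → X → Z} {x : α → X} {x₀ : X} {z : Z}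
    (hlip : ∀ i, LipschitzWith K (f i)) (hf : Tendsto (fun i ↦ f i x₀) l (𝓝 z))
    (hx : Tendsto x l (𝓝 x₀)) : Tendsto (fun i ↦ f i (x i)) l (𝓝 z) := by
  rw [tendsto_iff_dist_tendsto_zero] at hf hx ⊢
  have hbound : ∀ i, dist (f i (x i)) z ≤ K * dist (x i) x₀ + dist (f i x₀) z := fun i ↦
    (dist_triangle _ (f i x₀) _).trans (by gcongr; exact (hlip i).dist_le_mul _ _)
  exact squeeze_zero (fun _ ↦ dist_nonneg) hbound (by simpa using (hx.const_mul (K : ℝ)).add hf)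

variable {Z : Type*} [PseudoMetricSpace Z]

theorem exists_lipschitzWith_eqOn_Icc {K : NNReal} {γ : ℝ → Z} {a b : ℝ} (hab : a ≤ b)
    (hγ : LipschitzOnWith K γ (Icc a b)) :
    ∃ c : ℝ → Z, LipschitzWith K c ∧ EqOn c γ (Icc a b) := by
  refine ⟨IccExtend hab ((Icc a b).domRestrict γ), ?_, fun t ht ↦ IccExtend_of_mem hab _ ht⟩
  exact mul_one K ▸ hγ.to_restrict.comp (LipschitzWith.projIcc hab)

theorem dist_eq_of_mem_upperClosure_of_mem_lowerClosure {c : ℝ → Z} {A : Set ℝ}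
    (hc : LipschitzWith 1 c) (hA : ∀ a ∈ A, ∀ b ∈ A, dist (c a) (c b) = dist a b) {s t : ℝ}
    (hst : s ≤ t) (hs : s ∈ upperClosure A) (ht : t ∈ lowerClosure A) :
    dist (c s) (c t) = dist s t := by
  obtain ⟨a, ha, has⟩ := mem_upperClosure.1 hs
  obtain ⟨b, hb, htb⟩ := mem_lowerClosure.1 ht
  have hsplit : dist a b = dist a s + dist s t + dist t b := by
    simp only [Real.dist_eq, abs_sub_comm a, abs_sub_comm s t, abs_sub_comm t b]
    rw [abs_of_nonneg, abs_of_nonneg, abs_of_nonneg, abs_of_nonneg] <;> linarith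
  have hle : ∀ x y, dist (c x) (c y) ≤ dist x y := fun x y ↦ by simpa using hc.dist_le_mul x y
  refine (hle s t).antisymm ?_
  linarith [hA a ha b hb, dist_triangle4 (c a) (c s) (c t) (c b), hle a s, hle t b]

end MetricPreliminaries

section MonotoneTracking

open Filter Set Topology

variable {ι Y : Type*} [Preorder ι] [PseudoMetricSpace Y] {K : ℝ} {H : Set ι} {q : ι → Y}

/-- The map `q` stays on `H` within distance `K` of the path `c` run through along the nondecreasing
reparametrization `m`, and `c` preserves distances between the parameters `m h`. Asking `c` to be
`1`-Lipschitz on all of `ℝ`, rather than isometric on an interval containing `m '' H`, keeps the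
domain of `c` fixed when passing to limits. -/
structure MonotonelyTracks (K : ℝ) (H : Set ι) (q : ι → Y) (c : ℝ → Y) (m : ι → ℝ) : Prop where
  lipschitzWith : LipschitzWith 1 c
  monotoneOn : MonotoneOn m H
  dist_eq : ∀ h ∈ H, ∀ k ∈ H, dist (c (m h)) (c (m k)) = dist (m h) (m k)
  dist_le : ∀ h ∈ H, dist (q h) (c (m h)) ≤ K

namespace MonotonelyTracks

theorem translate {c : ℝ → Y} {m : ι → ℝ} (htr : MonotonelyTracks K H q c m) (r : ℝ) :
    MonotonelyTracks K H q (fun s ↦ c (s + r)) (fun h ↦ m h - r) where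
  lipschitzWith := mul_one (1 : NNReal) ▸
    htr.lipschitzWith.comp (isometry_add_right r).lipschitz
  monotoneOn h hh k hk hhk := sub_le_sub_right (htr.monotoneOn hh hk hhk) r
  dist_eq h hh k hk := by simpa only [sub_add_cancel, dist_sub_right] using htr.dist_eq h hh k hk
  dist_le h hh := by simpa only [sub_add_cancel] using htr.dist_le h hh

theorem dist_apply_le {c : ℝ → Y} {m : ι → ℝ} (htr : MonotonelyTracks K H q c m) {h : ι}
    (hh : h ∈ H) (s : ℝ) : dist (c s) (q h) ≤ dist s (m h) + K :=
  calc dist (c s) (q h) ≤ dist (c s) (c (m h)) + dist (q h) (c (m h)) := dist_triangle_right ..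
    _ ≤ dist s (m h) + K :=
      add_le_add (by simpa using htr.lipschitzWith.dist_le_mul s (m h)) (htr.dist_le h hh)

theorem dist_param_le {c : ℝ → Y} {m : ι → ℝ} (htr : MonotonelyTracks K H q c m) {h k : ι}
    (hh : h ∈ H) (hk : k ∈ H) : dist (m h) (m k) ≤ K + dist (q h) (q k) + K :=
  calc dist (m h) (m k) = dist (c (m h)) (c (m k)) := (htr.dist_eq h hh k hk).symm
    _ ≤ dist (c (m h)) (q h) + dist (q h) (q k) + dist (q k) (c (m k)) := dist_triangle4 ..
    _ ≤ K + dist (q h) (q k) + K := by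
      gcongr
      · exact dist_comm (q h) _ ▸ htr.dist_le h hh
      · exact htr.dist_le k hk

theorem of_tendsto {α : Type*} {l : Filter α} [l.NeBot] {F : α → Set ι} {c : α → ℝ → Y}
    {m : α → ι → ℝ} {c' : ℝ → Y} {m' : ι → ℝ} (hF : ∀ h ∈ H, ∀ᶠ i in l, h ∈ F i)
    (htr : ∀ i, MonotonelyTracks K (F i) q (c i) (m i))
    (hc : ∀ s, Tendsto (fun i ↦ c i s) l (𝓝 (c' s)))
    (hm : ∀ h ∈ H, Tendsto (fun i ↦ m i h) l (𝓝 (m' h))) :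
    MonotonelyTracks K H q c' m' := by
  have hcm : ∀ h ∈ H, Tendsto (fun i ↦ c i (m i h)) l (𝓝 (c' (m' h))) := fun h hh ↦
    tendsto_apply_of_lipschitzWith (fun i ↦ (htr i).lipschitzWith) (hc _) (hm h hh)
  refine ⟨?_, fun h hh k hk hhk ↦ ?_, fun h hh k hk ↦ ?_, fun h hh ↦ ?_⟩
  · exact (isClosed_setOfPred_lipschitzWith 1).mem_of_tendsto (tendsto_pi_nhds.2 hc)
      (.of_forall fun i ↦ (htr i).lipschitzWith)
  · refine le_of_tendsto_of_tendsto (hm h hh) (hm k hk) ?_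
    filter_upwards [hF h hh, hF k hk] with i hhi hki using (htr i).monotoneOn hhi hki hhk
  · refine tendsto_nhds_unique_of_eventuallyEq ((hcm h hh).dist (hcm k hk))
      ((hm h hh).dist (hm k hk)) ?_
    filter_upwards [hF h hh, hF k hk] with i hhi hki using (htr i).dist_eq h hhi k hki
  · refine le_of_tendsto (tendsto_const_nhds.dist (hcm h hh)) ?_
    filter_upwards [hF h hh] with i hhi using (htr i).dist_le h hhi

theorem exists_of_finite_subsets [ProperSpace Y] (hH : H.Nonempty)
    (hfin : ∀ F ⊆ H, F.Finite → F.Nonempty → ∃ c m, MonotonelyTracks K F q c m) :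
    ∃ c m, MonotonelyTracks K H q c m := by
  classical
  obtain ⟨h₀, hh₀⟩ := hH
  let window : Finset ι → Set ι := fun F ↦ insert h₀ (↑F ∩ H)
  have h₀_mem : ∀ F, h₀ ∈ window F := fun F ↦ mem_insert _ _
  have hnormalized : ∀ F, ∃ c m, MonotonelyTracks K (window F) q c m ∧ m h₀ = 0 := fun F ↦
    have ⟨c, m, htr⟩ := hfin (window F) (insert_subset hh₀ inter_subset_right)
      ((F.finite_toSet.inter_of_left H).insert h₀) ⟨h₀, h₀_mem F⟩
    ⟨_, _, htr.translate (m h₀), sub_self _⟩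
  choose c m htr hm₀ using hnormalized
  let U : Ultrafilter (Finset ι) := Ultrafilter.of atTop
  have hwindow : ∀ h ∈ H, ∀ᶠ F in U, h ∈ window F := fun h hh ↦ by
    filter_upwards [Ultrafilter.of_le atTop (eventually_ge_atTop {h})] with F hF
    exact .inr ⟨Finset.singleton_subset_iff.1 hF, hh⟩
  have hc : ∀ s, ∃ y, Tendsto (fun F ↦ c F s) U (𝓝 y) := fun s ↦
    exists_tendsto_of_eventually_dist_le U (.of_forall fun F ↦
      hm₀ F ▸ (htr F).dist_apply_le (h₀_mem F) s)
  have hm : ∀ h ∈ H, ∃ t, Tendsto (fun F ↦ m F h) U (𝓝 t) := fun h hh ↦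
    exists_tendsto_of_eventually_dist_le U ((hwindow h hh).mono fun F hF ↦
      hm₀ F ▸ (htr F).dist_param_le hF (h₀_mem F))
  choose c' hc' using hc
  choose! m' hm' using hm
  exact ⟨c', m', of_tendsto hwindow htr hc' hm'⟩

theorem exists_ordConnected_dist_eq {c : ℝ → Y} {m : ι → ℝ} (htr : MonotonelyTracks K H q c m) :
    ∃ I : Set ℝ, I.OrdConnected ∧ (∀ s ∈ I, ∀ t ∈ I, dist (c s) (c t) = dist s t) ∧
      MapsTo m H I := by
  have hpres : ∀ s ∈ m '' H, ∀ t ∈ m '' H, dist (c s) (c t) = dist s t :=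
    forall_mem_image.2 fun h hh ↦ forall_mem_image.2 fun k hk ↦ htr.dist_eq h hh k hk
  refine ⟨upperClosure (m '' H) ∩ lowerClosure (m '' H),
    (upperClosure _).upper.ordConnected.inter (lowerClosure _).lower.ordConnected,
    fun s hs t ht ↦ ?_, fun h hh ↦ ⟨subset_upperClosure (mem_image_of_mem m hh),
      subset_lowerClosure (mem_image_of_mem m hh)⟩⟩
  rcases le_total s t with hst | hts
  · exact dist_eq_of_mem_upperClosure_of_mem_lowerClosure htr.lipschitzWith hpres hst hs.1 ht.2
  · rw [dist_comm, dist_comm s]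
    exact dist_eq_of_mem_upperClosure_of_mem_lowerClosure htr.lipschitzWith hpres hts ht.1 hs.2

end MonotonelyTracks

end MonotoneTracking

section StraightTriples

open Set

variable {Y : Type*} [MetricSpace Y] {δ D : ℝ} {x y z : Y}

theorem IsGeodesicSegment.exists_lipschitzWith {s : Set Y} (hs : IsGeodesicSegment s x y) :
    ∃ c : ℝ → Y, LipschitzWith 1 c ∧
      (∀ t ∈ Icc 0 (dist x y), ∀ u ∈ Icc 0 (dist x y), dist (c t) (c u) = dist t u) ∧
      c 0 = x ∧ c (dist x y) = y ∧ s = c '' Icc 0 (dist x y) := by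
  obtain ⟨γ, hγ, hγ_left, hγ_right, rfl⟩ := hs
  obtain ⟨c, hlip, hc⟩ := exists_lipschitzWith_eqOn_Icc dist_nonneg
    (LipschitzOnWith.mk_one fun t ht u hu ↦ (hγ t ht u hu).le)
  refine ⟨c, hlip, fun t ht u hu ↦ ?_, ?_, ?_, hc.image_eq.symm⟩
  · rw [hc ht, hc hu, hγ t ht u hu, Real.dist_eq]
  · rw [hc (left_mem_Icc.2 dist_nonneg), hγ_left]
  · rw [hc (right_mem_Icc.2 dist_nonneg), hγ_right]

theorem IsGeodesicSegment.dist_add_dist {s : Set Y} {p : Y} (hs : IsGeodesicSegment s x y)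
    (hp : p ∈ s) : dist x p + dist p y = dist x y := by
  obtain ⟨c, -, hc, hc_left, hc_right, rfl⟩ := hs.exists_lipschitzWith
  obtain ⟨t, ht, rfl⟩ := hp
  have hleft := hc 0 (left_mem_Icc.2 dist_nonneg) t ht
  have hright := hc t ht _ (right_mem_Icc.2 dist_nonneg)
  rw [hc_left, dist_comm 0, Real.dist_0_eq_abs, abs_of_nonneg ht.1] at hleft
  rw [hc_right, dist_comm t, Real.dist_eq, abs_of_nonneg (sub_nonneg.2 ht.2)] at hright
  rw [hleft, hright, add_sub_cancel]

theorem IsGeodesicSegment.right_mem {s : Set Y} (hs : IsGeodesicSegment s x y) : y ∈ s := by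
  obtain ⟨c, -, -, hc_right, rfl⟩ := hs
  exact ⟨dist x y, right_mem_Icc.2 dist_nonneg, hc_right⟩

theorem IsDeltaHyperbolic.exists_mem_dist_le_of_adjacent (hhyp : IsDeltaHyperbolic Y δ)
    (hgeo : IsGeodesicSpace Y) {s s' : Set Y} {p : Y} (hs : IsGeodesicSegment s x y)
    (hs' : IsGeodesicSegment s' y z) (hp : p ∈ s) : ∃ w ∈ s', dist p w ≤ δ + dist z x := by
  obtain ⟨s'', hs''⟩ := hgeo z x
  obtain ⟨w, hw, hpw⟩ := (hhyp x y z s s' s'' hs hs' hs'').1 p hp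
  rcases hw with hw | hw
  · exact ⟨w, hw, hpw.trans (le_add_of_nonneg_right dist_nonneg)⟩
  · refine ⟨z, hs'.right_mem, ?_⟩
    linarith [dist_triangle p w z, dist_comm w z, hs''.dist_add_dist hw,
      dist_nonneg (x := w) (y := x)]

theorem IsStraightTriple.exists_mem_dist_le (h : IsStraightTriple D x y z)
    (hgeo : IsGeodesicSpace Y) (hhyp : IsDeltaHyperbolic Y δ) {s : Set Y}
    (hs : IsGeodesicSegment s x z) : ∃ w ∈ s, dist y w ≤ 2 * δ + 3 * D := by
  obtain ⟨x', y', z', ⟨s', hs', hy's'⟩, hx, hy, hz⟩ := h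
  obtain ⟨diag, hdiag⟩ := hgeo z' x
  obtain ⟨p, hp, hy'p⟩ := hhyp.exists_mem_dist_le_of_adjacent hgeo hs' hdiag hy's'
  obtain ⟨w, hw, hpw⟩ := hhyp.exists_mem_dist_le_of_adjacent hgeo hdiag hs hp
  refine ⟨w, hw, ?_⟩
  linarith [dist_triangle4 y y' p w]

theorem IsStraightTriple.dist_le_dist_add (h : IsStraightTriple D x y z) :
    dist x y ≤ dist x z + 4 * D := by
  obtain ⟨x', y', z', ⟨s, hs, hy's⟩, hx, hy, hz⟩ := h
  have hx'y' : dist x' y' ≤ dist x' z' :=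
    hs.dist_add_dist hy's ▸ le_add_of_nonneg_right dist_nonneg
  linarith [dist_triangle4 x x' y' y, dist_triangle4 x' x z z', dist_comm y y', dist_comm x x']

end StraightTriples

section StraightHoleyLineTracking

open Set

variable {Y : Type*} [MetricSpace Y] {δ D : ℝ} {H : Set ℝ} {q : ℝ → Y}

theorem IsStraightHoleyLine.mono {F : Set ℝ} (hq : IsStraightHoleyLine D H q) (hF : F ⊆ H) :
    IsStraightHoleyLine D F q :=
  fun a ha h hh b hb ↦ hq a (hF ha) h (hF hh) b (hF hb)

theorem IsStraightHoleyLine.exists_monotonelyTracks_of_isLeast_of_isGreatest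
    (hq : IsStraightHoleyLine D H q) (hgeo : IsGeodesicSpace Y) (hhyp : IsDeltaHyperbolic Y δ)
    {a b : ℝ} (ha : IsLeast H a) (hb : IsGreatest H b) :
    ∃ c m, MonotonelyTracks (6 * δ + 13 * D) H q c m := by
  obtain ⟨s, hs⟩ := hgeo (q a) (q b)
  obtain ⟨c, hlip, hc, hc_left, -, hsc⟩ := hs.exists_lipschitzWith
  have hnear : ∀ h ∈ H, ∃ t ∈ Icc 0 (dist (q a) (q b)), dist (q h) (c t) ≤ 2 * δ + 3 * D := by
    intro h hh
    have := (hq a ha.1 h hh b hb.1 (ha.2 hh) (hb.2 hh)).exists_mem_dist_le hgeo hhyp hs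
    rwa [hsc, exists_mem_image] at this
  choose! t ht hqt using hnear
  have dist_left : ∀ h ∈ H, dist (q a) (c (t h)) = t h := fun h hh ↦ by
    rw [← hc_left, hc 0 (left_mem_Icc.2 dist_nonneg) _ (ht h hh), dist_comm,
      Real.dist_0_eq_abs, abs_of_nonneg (ht h hh).1]
  have hcoarse : ∀ h ∈ H, ∀ k ∈ H, h ≤ k → t h ≤ t k + (4 * δ + 10 * D) := by
    intro h hh k hk hhk
    calc t h = dist (q a) (c (t h)) := (dist_left h hh).symm
      _ ≤ dist (q a) (q h) + (2 * δ + 3 * D) := by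
        linarith [dist_triangle (q a) (q h) (c (t h)), hqt h hh]
      _ ≤ dist (q a) (q k) + (2 * δ + 7 * D) := by
        linarith [(hq a ha.1 h hh k hk (ha.2 hh) hhk).dist_le_dist_add]
      _ ≤ dist (q a) (c (t k)) + (4 * δ + 10 * D) := by
        linarith [dist_triangle_right (q a) (q k) (c (t k)), hqt k hk]
      _ = t k + (4 * δ + 10 * D) := by rw [dist_left k hk]
  obtain ⟨m, hmono, hm, htm⟩ := exists_monotoneOn_of_le_add ht hcoarse
  refine ⟨c, m, hlip, hmono, fun h hh k hk ↦ hc _ (hm hh) _ (hm hk), fun h hh ↦ ?_⟩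
  linarith [dist_triangle (q h) (c (t h)) (c (m h)), hqt h hh, hc _ (ht h hh) _ (hm hh), htm h hh]

theorem IsStraightHoleyLine.exists_monotonelyTracks [ProperSpace Y]
    (hq : IsStraightHoleyLine D H q) (hgeo : IsGeodesicSpace Y) (hhyp : IsDeltaHyperbolic Y δ) :
    ∃ c m, MonotonelyTracks (6 * δ + 13 * D) H q c m := by
  rcases H.eq_empty_or_nonempty with rfl | hH
  · exact ⟨fun _ ↦ q 0, 0, .mk_one (by simp), subsingleton_empty.monotoneOn _, by simp, by simp⟩
  refine MonotonelyTracks.exists_of_finite_subsets hH fun F hFH hFfin hFne ↦ ?_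
  obtain ⟨a, ha⟩ := hFfin.isCompact.exists_isLeast hFne
  obtain ⟨b, hb⟩ := hFfin.isCompact.exists_isGreatest hFne
  exact (hq.mono hFH).exists_monotonelyTracks_of_isLeast_of_isGreatest hgeo hhyp ha hb

end StraightHoleyLineTracking

/-- For every `δ ≥ 0` and `D ≥ 0` there is `D' = D'(δ, D)`: any `D`-straight holey line
`q : H → Y` in a proper geodesic `δ`-hyperbolic space `Y` is, up to error `D'`, a monotonic
map into a geodesic: there are an interval `I ⊆ ℝ`, an isometric embedding `c : I → Y`, and
a nondecreasing map `m : H → I` with `dist (q h) (c (m h)) ≤ D'` for all `h ∈ H`. -/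
theorem straight_holey_line_near_geodesic :
    ∀ δ D : ℝ, 0 ≤ δ → 0 ≤ D → ∃ D' : ℝ,
      ∀ (Y : Type*) [MetricSpace Y], ∀ (_ : ProperSpace Y),
        IsGeodesicSpace Y → IsDeltaHyperbolic Y δ →
        ∀ (H : Set ℝ) (q : ℝ → Y), IsStraightHoleyLine D H q →
          ∃ (I : Set ℝ) (c : ℝ → Y) (m : ℝ → ℝ),
            I.OrdConnected ∧
            (∀ t₁ ∈ I, ∀ t₂ ∈ I, dist (c t₁) (c t₂) = |t₁ - t₂|) ∧
            Set.MapsTo m H I ∧ MonotoneOn m H ∧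
            ∀ h ∈ H, dist (q h) (c (m h)) ≤ D' := by
  intro δ D _ _
  refine ⟨6 * δ + 13 * D, fun Y _ _ hgeo hhyp H q hq ↦ ?_⟩
  obtain ⟨c, m, htr⟩ := hq.exists_monotonelyTracks hgeo hhyp
  obtain ⟨I, hI, hc, hm⟩ := htr.exists_ordConnected_dist_eq
  exact ⟨I, c, m, hI, hc, hm, htr.monotoneOn, htr.dist_le⟩
end
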